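/- Let X ⊂ P^n be a variety such that every point of X has at most i−1 zero coordinates (X ∩ Δ_{n−i} = ∅). Then every point of the r-th Hadamard power X^{⋆r} has at most r(i−1) zero coordinates; that is, X^{⋆r} ∩ Δ_{n−ri+r−1} = ∅. -/

import Mathlib

/-!
Write `a = i - 1`, and let `J` be a set of more than `r * a` coordinates. The claim is that a point
of `X^{⋆r}` on which all coordinates in `J` vanish must be zero; since `X^{⋆r}` is a Zariski closure,
this is shown by producing, for each coordinate `l`, a homogeneous equation of the Hadamard power
of the form `x_l ^ s + (terms in the ideal (x_j : j ∈ J))`. In other words, the coordinates in `J`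
are shown to define a finite projection.

* By the Nullstellensatz, `I(X) + (x_j : j ∈ K)` contains a power of the irrelevant ideal whenever
  `K` has `a + 1` elements. Applied repeatedly, this rewrites any monomial of large degree on `X` as
  a combination of monomials of the same degree that omit at most `a` coordinates
  (`monoOn_mem_span_few_zeros`).
* On `X ^ r` put `y_j = ∏ k, (p k) j`. If `e` is a monomial of multidegree `(d, …, d)`, expand each
  of the `r` factors of `y_l * e` in this way. Altogether at most `r * a` coordinates are omitted,
  so in each resulting term some `j ∈ J` occurs in every factor and `y_j` can be split off. Hence
  `y_l * e_S = ∑ T, L_{S T}(y) * e_T` with `L_{S T}` linear forms in the `y_j`, `j ∈ J`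
  (`hadCoord_mul_mem_span`).
* The determinant trick gives the equation `det (x_l - L(x)) = 0`: it is homogeneous, it vanishes on
  products of nonzero points because the vector of all `e_S` is nonzero there, and it becomes
  `x_l ^ s` when the coordinates in `J` vanish (`eq_zero_of_mem_zclosure`).
-/

/-- The projective Zariski closure of a set of coordinate vectors: the points at which
every homogeneous polynomial vanishing on the set vanishes. -/
def zclosure {n : ℕ} (S : Set (Fin n → ℂ)) : Set (Fin n → ℂ) :=
  {x | ∀ (d : ℕ) (f : MvPolynomial (Fin n) ℂ), f.IsHomogeneous d →
    (∀ s ∈ S, MvPolynomial.eval s f = 0) → MvPolynomial.eval x f = 0}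

/-! ### Homogeneous components on a cone -/

open MvPolynomial in
theorem eval_smul_of_isHomogeneous {m d : ℕ} {f : MvPolynomial (Fin m) ℂ}
    (hf : f.IsHomogeneous d) (c : ℂ) (x : Fin m → ℂ) : eval (c • x) f = c ^ d * eval x f := by
  rw [eval_eq', eval_eq', Finset.mul_sum]
  refine Finset.sum_congr rfl fun s hs => ?_
  have hd : ∑ j, s j = d := by
    rw [hf.degree_eq_sum_deg_support hs]
    exact (Finsupp.degree_eq_sum s).symm
  simp only [Pi.smul_apply, smul_eq_mul, mul_pow, Finset.prod_mul_distrib,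
    Finset.prod_pow_eq_pow_sum, hd]
  ring

open MvPolynomial in
/-- The ideal of a cone is homogeneous. -/
theorem eval_homogeneousComponent_eq_zero {m : ℕ} {X : Set (Fin m → ℂ)}
    (hX : ∀ c : ℂ, c ≠ 0 → ∀ x ∈ X, c • x ∈ X) {f : MvPolynomial (Fin m) ℂ}
    (hf : ∀ x ∈ X, eval x f = 0) (d : ℕ) {x : Fin m → ℂ} (hx : x ∈ X) :
    eval x (homogeneousComponent d f) = 0 := by
  set p : Polynomial ℂ := ∑ e ∈ Finset.range (f.totalDegree + 1),
    Polynomial.monomial e (eval x (homogeneousComponent e f)) with hp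
  -- `p` is the restriction of `f` to the line through `x`, so it vanishes at every `c ≠ 0`.
  have hroot : ∀ c : ℂ, c ≠ 0 → p.IsRoot c := by
    intro c hc
    have h := hf _ (hX c hc x hx)
    rw [← sum_homogeneousComponent f, map_sum] at h
    rw [Polynomial.IsRoot.def, hp, Polynomial.eval_finsetSum, ← h]
    refine Finset.sum_congr rfl fun e _ => ?_
    rw [eval_smul_of_isHomogeneous (homogeneousComponent_isHomogeneous e f),
      Polynomial.eval_monomial, mul_comm]
  have hp0 : p = 0 := by
    refine Polynomial.eq_zero_of_infinite_isRoot p (Set.Infinite.mono (s := {0}ᶜ) ?_ ?_)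
    · intro c hc
      exact hroot c hc
    · exact (Set.finite_singleton (0 : ℂ)).infinite_compl
  by_cases hd : d < f.totalDegree + 1
  · have h := congrArg (fun q => Polynomial.coeff q d) hp0
    simpa [hp, Polynomial.finsetSum_coeff, Polynomial.coeff_monomial, hd] using h
  · rw [homogeneousComponent_eq_zero _ _ (by omega), map_zero]

/-! ### Rewriting monomials of large degree on a projective variety -/

/-- The monomial `x ^ s`, as a function on `X`. -/
def monoOn {m : ℕ} (X : Set (Fin m → ℂ)) (s : Fin m → ℕ) : X → ℂ :=
  fun x => ∏ j, x.1 j ^ s j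

theorem monoOn_add {m : ℕ} (X : Set (Fin m → ℂ)) (s t : Fin m → ℕ) :
    monoOn X (s + t) = monoOn X s * monoOn X t := by
  funext x
  simp [monoOn, pow_add, Finset.prod_mul_distrib]

open MvPolynomial in
/-- If the coordinates in `K` have no common zero on the projective variety `X`, then on `X` every
monomial of large degree is a combination of monomials of the same degree that each involve a
coordinate in `K`. This is the projective Nullstellensatz for `I(X) + (x_j : j ∈ K)`. -/
theorem monoOn_mem_span_of_no_common_zero {m : ℕ} {X : Set (Fin m → ℂ)}
    (hX : ∀ c : ℂ, c ≠ 0 → ∀ x ∈ X, c • x ∈ X) (hcl : zclosure X ⊆ X) (K : Finset (Fin m))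
    (hK : ∀ x ∈ X, (∀ j ∈ K, x j = 0) → x = 0) :
    ∃ N : ℕ, ∀ s : Fin m → ℕ, N ≤ ∑ j, s j →
      monoOn X s ∈ Submodule.span ℂ (monoOn X '' {t | ∑ j, t j = ∑ j, s j ∧ ∃ j ∈ K, t j ≠ 0}) := by
  set I : Ideal (MvPolynomial (Fin m) ℂ) :=
    vanishingIdeal ℂ X ⊔ Ideal.span (MvPolynomial.X '' (K : Set (Fin m))) with hI
  have hrad : idealOfVars (Fin m) ℂ ≤ I.radical := by
    rw [← vanishingIdeal_zeroLocus_eq_radical (K := ℂ), idealOfVars, Ideal.span_le]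
    rintro _ ⟨l, rfl⟩ x hx
    have hxX : x ∈ X := hcl fun d f _ hf => by
      have := hx f (Ideal.mem_sup_left fun y hy => by simpa [aeval_eq_eval] using hf y hy)
      simpa [aeval_eq_eval] using this
    have := hK x hxX fun j hj => by
      simpa using hx (MvPolynomial.X j)
        (Ideal.mem_sup_right (Ideal.subset_span ⟨j, hj, rfl⟩))
    simp [this]
  obtain ⟨N, hN⟩ := Ideal.exists_pow_le_of_le_radical_of_fg hrad (idealOfVars_fg _ _)
  refine ⟨N, fun s hs => ?_⟩
  have hdeg : ∀ u : Fin m →₀ ℕ, u.degree = ∑ j, u j := fun u => Finsupp.degree_eq_sum u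
  set s' : Fin m →₀ ℕ := Finsupp.equivFunOnFinite.symm s with hs'
  have hs'j : ∀ j, s' j = s j := fun j => rfl
  have hs'd : s'.degree = ∑ j, s j := hdeg s'
  have hmem : monomial s' (1 : ℂ) ∈ I := by
    refine hN (Ideal.pow_le_pow_right hs ?_)
    rw [monomial_mem_pow_idealOfVars_iff _ _ one_ne_zero, hs'd]
  obtain ⟨g, hg, h, hh, hgh⟩ := Submodule.mem_sup.1 hmem
  rw [mem_ideal_span_X_image] at hh
  set d := ∑ j, s j with hd
  have hcomp : homogeneousComponent d g + homogeneousComponent d h = monomial s' (1 : ℂ) := by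
    rw [← map_add, hgh]
    exact homogeneousComponent_eq_self (isHomogeneous_monomial _ hs'd)
  have hfun : monoOn X s = ∑ u ∈ (homogeneousComponent d h).support,
      coeff u (homogeneousComponent d h) • monoOn X u := by
    funext x
    have h1 := congrArg (eval x.1) hcomp
    rw [map_add, eval_homogeneousComponent_eq_zero hX
      (fun y hy => by simpa [aeval_eq_eval] using hg y hy) d x.2, zero_add, eval_monomial,
      one_mul, Finsupp.prod_fintype _ _ (fun _ => pow_zero _), eval_eq'] at h1
    simp only [Finset.sum_apply, Pi.smul_apply, smul_eq_mul, monoOn]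
    rw [h1]
    rfl
  rw [hfun]
  refine Submodule.sum_mem _ fun u hu => Submodule.smul_mem _ _ (Submodule.subset_span ⟨u, ?_, rfl⟩)
  rw [mem_support_iff, coeff_homogeneousComponent] at hu
  split_ifs at hu with hud
  · exact ⟨by rw [← hud, hdeg], hh u (mem_support_iff.2 hu)⟩
  · exact absurd rfl hu

/-- If the points of `X` have at most `a` zero coordinates, then on `X` every monomial of large
degree is a combination of monomials of the same degree that involve all but at most `a` of the
coordinates. -/
theorem monoOn_mem_span_few_zeros {m a : ℕ} {X : Set (Fin m → ℂ)}
    (hX : ∀ c : ℂ, c ≠ 0 → ∀ x ∈ X, c • x ∈ X) (hcl : zclosure X ⊆ X)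
    (ha : ∀ x ∈ X, x ≠ 0 → {j | x j = 0}.ncard ≤ a) :
    ∃ N : ℕ, ∀ s : Fin m → ℕ, N ≤ ∑ j, s j →
      monoOn X s ∈ Submodule.span ℂ (monoOn X ''
        {t | ∑ j, t j = ∑ j, s j ∧ (Finset.univ.filter fun j => t j = 0).card ≤ a}) := by
  have hK : ∀ K : Finset (Fin m), ∃ N : ℕ, K.card = a + 1 → ∀ s : Fin m → ℕ, N ≤ ∑ j, s j →
      monoOn X s ∈ Submodule.span ℂ
        (monoOn X '' {t | ∑ j, t j = ∑ j, s j ∧ ∃ j ∈ K, t j ≠ 0}) := by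
    intro K
    by_cases hc : K.card = a + 1
    · obtain ⟨N, hN⟩ := monoOn_mem_span_of_no_common_zero hX hcl K fun x hx hxK => by
        by_contra hx0
        have h1 := ha x hx hx0
        have h2 : (K : Set (Fin m)).ncard ≤ {j | x j = 0}.ncard :=
          Set.ncard_le_ncard (fun j hj => hxK j hj) (Set.toFinite _)
        rw [Set.ncard_coe_finset] at h2
        omega
      exact ⟨N, fun _ => hN⟩
    · exact ⟨0, fun h => absurd h hc⟩
  choose N hN using hK
  refine ⟨Finset.univ.sup N + m, ?_⟩
  -- Induction on the number of coordinates missing from the monomial.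
  suffices H : ∀ z : ℕ, ∀ s : Fin m → ℕ, (Finset.univ.filter fun j => s j = 0).card = z →
      Finset.univ.sup N + m ≤ ∑ j, s j →
      monoOn X s ∈ Submodule.span ℂ (monoOn X ''
        {t | ∑ j, t j = ∑ j, s j ∧ (Finset.univ.filter fun j => t j = 0).card ≤ a}) from
    fun s hs => H _ s rfl hs
  intro z
  induction z using Nat.strong_induction_on with
  | _ z ih =>
  intro s hz hs
  by_cases hza : z ≤ a
  · exact Submodule.subset_span ⟨s, ⟨rfl, hz.trans_le hza⟩, rfl⟩
  obtain ⟨K, hKs, hKc⟩ := Finset.exists_subset_card_eq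
    (s := Finset.univ.filter fun j => s j = 0) (n := a + 1) (by omega)
  -- `s = u + v` with `u` the indicator of the support of `s`; a coordinate in `K` is
  -- introduced through `v`, while `u` keeps the coordinates that are already present.
  set u : Fin m → ℕ := fun j => if s j = 0 then 0 else 1 with hu
  set v : Fin m → ℕ := fun j => s j - 1 with hv
  have huv : u + v = s := by
    funext j
    simp only [hu, hv, Pi.add_apply]
    split_ifs <;> omega
  have hu_le : ∑ j, u j ≤ m := by
    calc ∑ j, u j ≤ ∑ _j : Fin m, 1 := Finset.sum_le_sum fun j _ => by
          simp only [hu]; split_ifs <;> omega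
      _ = m := by simp
  have hsum : ∑ j, u j + ∑ j, v j = ∑ j, s j := by
    rw [← Finset.sum_add_distrib]
    exact Finset.sum_congr rfl fun j _ => congrFun huv j
  have hNK : N K ≤ Finset.univ.sup N := Finset.le_sup (Finset.mem_univ K)
  have hvm := hN K hKc v (by omega)
  have hmul : monoOn X s ∈ Submodule.span ℂ ((fun f => monoOn X u * f) ''
      (monoOn X '' {t | ∑ j, t j = ∑ j, v j ∧ ∃ j ∈ K, t j ≠ 0})) := by
    have := Submodule.mem_map_of_mem (f := LinearMap.mulLeft ℂ (monoOn X u)) hvm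
    rw [Submodule.map_span] at this
    rw [← huv, monoOn_add]
    exact this
  refine Submodule.span_le.2 ?_ hmul
  rintro _ ⟨_, ⟨t, ⟨htd, j, hjK, htj⟩, rfl⟩, rfl⟩
  have hdeg : ∑ l, (u + t) l = ∑ l, s l := by
    simp only [Pi.add_apply, Finset.sum_add_distrib]
    omega
  have hlt : (Finset.univ.filter fun l => (u + t) l = 0).card < z := by
    rw [← hz]
    refine Finset.card_lt_card (Finset.ssubset_iff_of_subset ?_ |>.2 ⟨j, hKs hjK, ?_⟩)
    · intro l
      simp only [Finset.mem_filter, Finset.mem_univ, true_and, Pi.add_apply, hu]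
      split_ifs <;> omega
    · simp [htj]
  have := ih _ hlt (u + t) rfl (by omega)
  rw [hdeg, monoOn_add] at this
  exact this

/-! ### Multigraded monomials on a power of a projective variety -/

/-- The multigraded monomial `∏ k, p_k ^ (S k)`, as a function of `p ∈ X ^ r`. -/
def multiMonoOn {m r : ℕ} (X : Set (Fin m → ℂ)) (S : Fin r → Fin m → ℕ) : (Fin r → X) → ℂ :=
  fun p => ∏ k, monoOn X (S k) (p k)

/-- The `j`-th coordinate of the Hadamard product, as a function of `p ∈ X ^ r`. -/
def hadCoord {m r : ℕ} (X : Set (Fin m → ℂ)) (j : Fin m) : (Fin r → X) → ℂ :=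
  fun p => ∏ k, (p k).1 j

theorem monoOn_single {m : ℕ} (X : Set (Fin m → ℂ)) (j : Fin m) (x : X) :
    monoOn X (Pi.single j 1) x = x.1 j := by
  rw [monoOn, Finset.prod_eq_single j]
  · simp
  · intro l _ hl
    simp [hl]
  · simp

theorem multiMonoOn_add_single {m r : ℕ} (X : Set (Fin m → ℂ)) (S : Fin r → Fin m → ℕ)
    (j : Fin m) :
    multiMonoOn X (fun k => S k + Pi.single j 1) = hadCoord X j * multiMonoOn X S := by
  funext p
  simp only [multiMonoOn, hadCoord, monoOn_add, Pi.mul_apply, monoOn_single,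
    Finset.prod_mul_distrib]
  ring

/-- In large multidegree `(d, …, d)`, multiplication by any coordinate of the Hadamard product
factors through the coordinates indexed by `J`, as soon as `J` has more than `r * a` elements.
Indeed each factor can be expanded in monomials missing at most `a` coordinates, and then some
`j ∈ J` occurs in all `r` factors. -/
theorem hadCoord_mul_mem_span {m r a : ℕ} {X : Set (Fin m → ℂ)}
    (hX : ∀ c : ℂ, c ≠ 0 → ∀ x ∈ X, c • x ∈ X) (hcl : zclosure X ⊆ X)
    (ha : ∀ x ∈ X, x ≠ 0 → {j | x j = 0}.ncard ≤ a) (J : Finset (Fin m)) (hJ : r * a < J.card) :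
    ∃ d : ℕ, ∀ (l : Fin m) (S : Fin r → Fin m → ℕ), (∀ k, ∑ j, S k j = d) →
      hadCoord X l * multiMonoOn X S ∈ Submodule.span ℂ (Set.range
        fun q : J × (Fin r → (Finset.univ : Finset (Fin m)).piAntidiag d) =>
          hadCoord X q.1.1 * multiMonoOn X (fun k => (q.2 k).1)) := by
  obtain ⟨d, hd⟩ := monoOn_mem_span_few_zeros hX hcl ha
  refine ⟨d, fun l S hS => ?_⟩
  set G : Finset (Fin m → ℕ) := ((Finset.univ : Finset (Fin m)).piAntidiag (d + 1)).filter
    fun t => (Finset.univ.filter fun j => t j = 0).card ≤ a with hG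
  have hdeg : ∀ k, ∑ j, (S k + Pi.single l 1 : Fin m → ℕ) j = d + 1 := fun k => by
    simp [Finset.sum_add_distrib, hS]
  have hc : ∀ k, ∃ c : (Fin m → ℕ) → ℂ,
      ∑ t ∈ G, c t • monoOn X t = monoOn X (S k + Pi.single l 1) := by
    intro k
    have h := hd (S k + Pi.single l 1) (by rw [hdeg]; omega)
    rw [hdeg] at h
    rw [← Submodule.mem_span_image_finset_iff_exists_fun']
    convert h using 3
    ext t
    simp [hG]
  choose c hc using hc
  have hprod : hadCoord X l * multiMonoOn X S = ∑ T ∈ Fintype.piFinset fun _ : Fin r => G,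
      (∏ k, c k (T k)) • multiMonoOn X T := by
    rw [← multiMonoOn_add_single]
    funext p
    simp only [multiMonoOn, ← hc, Finset.sum_apply, Pi.smul_apply, smul_eq_mul,
      Finset.prod_univ_sum, Finset.prod_mul_distrib]
  rw [hprod]
  refine Submodule.sum_mem _ fun T hT => Submodule.smul_mem _ _ ?_
  have hT' : ∀ k, ∑ j, T k j = d + 1 ∧ (Finset.univ.filter fun j => T k j = 0).card ≤ a := by
    intro k
    simpa [hG] using Fintype.mem_piFinset.1 hT k
  obtain ⟨j, hjJ, hj⟩ : ∃ j ∈ J, ∀ k, T k j ≠ 0 := by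
    by_contra! hcon
    have hsub : J ⊆ Finset.univ.biUnion fun k : Fin r =>
        Finset.univ.filter fun j => T k j = 0 := by
      intro j hj
      simpa using hcon j hj
    have h1 := Finset.card_le_card hsub
    have h2 := Finset.card_biUnion_le_card_mul (Finset.univ : Finset (Fin r))
      (fun k => Finset.univ.filter fun j => T k j = 0) a (fun k _ => (hT' k).2)
    simp only [Finset.card_univ, Fintype.card_fin] at h2
    omega
  have hle : ∀ k, (T k - Pi.single j 1) + Pi.single j 1 = T k := by
    intro k
    funext i
    rcases eq_or_ne i j with rfl | hij
    · have := hj k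
      simp; omega
    · simp [hij]
  have hTd : ∀ k, T k - Pi.single j 1 ∈ (Finset.univ : Finset (Fin m)).piAntidiag d := by
    intro k
    have h1 := (hT' k).1
    rw [← hle k] at h1
    simp only [Pi.add_apply, Finset.sum_add_distrib, Finset.sum_pi_single',
      Finset.mem_univ, if_true] at h1
    simpa using h1
  refine Submodule.subset_span ⟨(⟨j, hjJ⟩, fun k => ⟨_, hTd k⟩), ?_⟩
  simp only [← multiMonoOn_add_single, hle]

/-! ### The determinant trick -/

open MvPolynomial in
theorem isHomogeneous_det {m : ℕ} {ι : Type*} [Fintype ι] [DecidableEq ι]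
    (M : Matrix ι ι (MvPolynomial (Fin m) ℂ)) (hM : ∀ a b, (M a b).IsHomogeneous 1) :
    M.det.IsHomogeneous (Fintype.card ι) := by
  rw [Matrix.det_apply]
  refine IsHomogeneous.sum _ _ _ fun σ _ => ?_
  have h : (∏ i, M (σ i) i).IsHomogeneous (Fintype.card ι) := by
    have := IsHomogeneous.prod Finset.univ (fun i => M (σ i) i) (fun _ => 1) fun i _ => hM _ _
    simpa using this
  rcases Int.units_eq_one_or (Equiv.Perm.sign σ) with hs | hs
  · simpa [hs] using h
  · simpa [hs] using h.neg

open MvPolynomial in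
/-- A point of the closed Hadamard power at which all coordinates in `J` vanish is zero. -/
theorem eq_zero_of_mem_zclosure {m r a : ℕ} {X : Set (Fin m → ℂ)}
    (hX : ∀ c : ℂ, c ≠ 0 → ∀ x ∈ X, c • x ∈ X) (hcl : zclosure X ⊆ X)
    (ha : ∀ x ∈ X, x ≠ 0 → {j | x j = 0}.ncard ≤ a) (J : Finset (Fin m)) (hJ : r * a < J.card)
    {x : Fin m → ℂ} (hx : x ∈ zclosure {w : Fin m → ℂ | w ≠ 0 ∧
        ∃ p : Fin r → (Fin m → ℂ), (∀ k, p k ∈ X ∧ p k ≠ 0) ∧ w = ∏ k, p k})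
    (hxJ : ∀ j ∈ J, x j = 0) : x = 0 := by
  classical
  obtain ⟨d, hd⟩ := hadCoord_mul_mem_span hX hcl ha J hJ
  funext l
  let ι := Fin r → (Finset.univ : Finset (Fin m)).piAntidiag d
  have hS : ∀ S : ι, ∃ c : J × ι → ℂ,
      ∑ q, c q • (hadCoord X q.1.1 * multiMonoOn X (fun k => (q.2 k).1)) =
        hadCoord X l * multiMonoOn X (fun k => (S k).1) := fun S =>
    (Submodule.mem_span_range_iff_exists_fun ℂ).1
      (hd l (fun k => (S k).1) fun k => (Finset.mem_piAntidiag.1 (S k).2).1)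
  choose c hc using hS
  -- At a Hadamard product, `M = x_l - L` annihilates the vector of multigraded monomials.
  let L : Matrix ι ι (MvPolynomial (Fin m) ℂ) :=
    Matrix.of fun S T => ∑ j : J, C (c S (j, T)) * MvPolynomial.X j.1
  let M : Matrix ι ι (MvPolynomial (Fin m) ℂ) := Matrix.scalar ι (MvPolynomial.X l) - L
  have hMh : ∀ S T, (M S T).IsHomogeneous 1 := by
    intro S T
    refine IsHomogeneous.sub ?_ (IsHomogeneous.sum _ _ _ fun j _ => isHomogeneous_C_mul_X _ _)
    rw [Matrix.scalar_apply, Matrix.diagonal_apply]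
    split_ifs
    · exact isHomogeneous_X _ _
    · exact isHomogeneous_zero _ _ _
  have heval : ∀ y : Fin m → ℂ, eval y M.det = (Matrix.scalar ι (y l) -
      Matrix.of fun S T => ∑ j : J, c S (j, T) * y j.1).det := by
    intro y
    rw [RingHom.map_det]
    congr 1
    ext S T
    simp only [M, L, RingHom.mapMatrix_apply, Matrix.map_apply, Matrix.sub_apply,
      Matrix.scalar_apply, Matrix.diagonal_apply, Matrix.of_apply, map_sub, map_sum, map_mul,
      eval_C, eval_X]
    split_ifs <;> simp
  have hvan := hx _ M.det (isHomogeneous_det M hMh) (by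
    rintro _ ⟨-, p, hp, rfl⟩
    rw [heval, ← Matrix.exists_mulVec_eq_zero_iff]
    let P : Fin r → X := fun k => ⟨p k, (hp k).1⟩
    have hP : ∀ j, (∏ k, p k) j = hadCoord X j P := fun j => by
      simp [hadCoord, P, Finset.prod_apply]
    refine ⟨fun S => multiMonoOn X (fun k => (S k).1) P, ?_, ?_⟩
    · have hne : ∀ k, ∃ j, p k j ≠ 0 := fun k => Function.ne_iff.1 (hp k).2
      choose i hi using hne
      refine Function.ne_iff.2 ⟨fun k => ⟨Pi.single (i k) d, by simp⟩, ?_⟩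
      refine Finset.prod_ne_zero_iff.2 fun k _ => Finset.prod_ne_zero_iff.2 fun j _ => ?_
      rcases eq_or_ne j (i k) with rfl | hj
      · exact pow_ne_zero _ (hi k)
      · simp [hj]
    · funext S
      have h := congrFun (hc S) P
      simp only [Finset.sum_apply, Pi.smul_apply, Pi.mul_apply, smul_eq_mul,
        Fintype.sum_prod_type] at h
      rw [Matrix.sub_mulVec, Pi.sub_apply, Pi.zero_apply, sub_eq_zero, Matrix.scalar_apply,
        Matrix.mulVec_diagonal]
      simp only [Matrix.mulVec, dotProduct, Matrix.of_apply, hP]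
      rw [← h, Finset.sum_comm]
      refine Finset.sum_congr rfl fun T _ => ?_
      rw [Finset.sum_mul]
      exact Finset.sum_congr rfl fun j _ => by ring)
  rw [heval] at hvan
  have hL : (Matrix.of fun S T : ι => ∑ j : J, c S (j, T) * x j.1) = 0 := by
    ext S T
    simp only [Matrix.of_apply, Matrix.zero_apply]
    exact Finset.sum_eq_zero fun j _ => by rw [hxJ j.1 j.2, mul_zero]
  rw [hL, sub_zero, Matrix.scalar_apply, Matrix.det_diagonal, Finset.prod_const] at hvan
  exact eq_zero_of_pow_eq_zero hvan

/-- If every point of the projective variety `X` has at most `i - 1` zero coordinates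
(`X ∩ Δ_{n-i} = ∅`), then every point of the Hadamard power `X^{⋆r}` has at most
`r(i-1)` zero coordinates (`X^{⋆r} ∩ Δ_{n-ri+r-1} = ∅`). -/
theorem hadamard_power_zero_coords (n r i : ℕ) (hi : 1 ≤ i)
    (X : Set (Fin (n + 1) → ℂ))
    (hXcone : ∀ (c : ℂ), c ≠ 0 → ∀ x ∈ X, c • x ∈ X)
    (hXcl : zclosure X ⊆ X)
    (hXΔ : ∀ x ∈ X, x ≠ 0 → {j : Fin (n + 1) | x j = 0}.ncard ≤ i - 1) :
    ∀ x ∈ zclosure {w : Fin (n + 1) → ℂ | w ≠ 0 ∧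
        ∃ p : Fin r → (Fin (n + 1) → ℂ), (∀ k, p k ∈ X ∧ p k ≠ 0) ∧ w = ∏ k, p k},
      x ≠ 0 → {j : Fin (n + 1) | x j = 0}.ncard ≤ r * (i - 1) := by 
  intro x hx hx0
  by_contra hcard
  rw [Set.ncard_eq_toFinset_card'] at hcard
  exact hx0 (eq_zero_of_mem_zclosure hXcone hXcl hXΔ _ (not_le.1 hcard) hx fun j hj => by
    simpa using hj)
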